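/- Lemma 2: Under Assumption A, with aᵢ = Σᵢ₁/Σ₁₁ − 1 > 0, cᵢ = exp(μᵢ − (Σᵢ₁/Σ₁₁)μ₁), and i₀ the index maximizing cᵢ γ^{aᵢ} for small γ, there exists a constant C₂ such that for all sufficiently small γ > 0, P₁ − P₂ ≤ C₂ γ^{a_{i₀}}, where P₁ = P_g(exp(Y₁) ≤ γ) and P₂ = P_g(Σᵢ exp(Yᵢ) ≤ γ) under the mean-shifted measure g. -/

import Mathlib

open MeasureTheory Matrix Real Filter

noncomputable def mvnPdf {n : ℕ} (m : Fin n → ℝ) (S : Matrix (Fin n) (Fin n) ℝ)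
    (y : Fin n → ℝ) : ℝ :=
  Real.exp (-(1/2) * ((y - m) ⬝ᵥ S⁻¹.mulVec (y - m))) / Real.sqrt ((2 * Real.pi) ^ n * S.det)

noncomputable def stdNormCDF (x : ℝ) : ℝ :=
  ∫ t in Set.Iic x, Real.exp (-t ^ 2 / 2) / Real.sqrt (2 * Real.pi)

/-!
The matrix `Σ⁻¹` dominates a multiple of the identity, so `g` is bounded by a constant times a
product of one-dimensional Gaussian densities with the same mean vector `ν`, and it suffices to
bound the probability of `e^{Y_k} ≤ γ < ∑ i, e^{Y_i}` for independent `Y_i ∼ 𝒩(ν_i, v)`. Given the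
other coordinates, `e^{Y_k}` has to fall in an interval of length `∑ i ≠ k, e^{Y_i}`; as its density
is at most a multiple of `e^{-ν_k}`, the probability is at most a multiple of
`e^{-ν_k} ∑ i ≠ k, 𝔼 e^{Y_i}`, that is, of `∑ i ≠ k, e^{ν_i - ν_k}`. For the shifted mean
`ν = μ + Λ*` one has `e^{ν_i - ν_k} = cᵢ γ^{aᵢ}`.
-/

open ProbabilityTheory
open scoped NNReal ENNReal

lemma exists_pos_mul_dotProduct_self_le_of_posDef {ι : Type*} [Fintype ι] {A : Matrix ι ι ℝ}
    (hA : A.PosDef) : ∃ r > 0, ∀ z : ι → ℝ, r * (z ⬝ᵥ z) ≤ z ⬝ᵥ A *ᵥ z := by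
  classical
  open scoped MatrixOrder in
  rcases isEmpty_or_nonempty ι with _ | _
  · exact ⟨1, one_pos, fun z => by simp [dotProduct]⟩
  obtain ⟨r, hr, hrA⟩ := (CFC.exists_pos_algebraMap_le_iff hA.isHermitian.isSelfAdjoint).2
    fun _ => hA.isStrictlyPositive.spectrum_pos
  refine ⟨r, hr, fun z => ?_⟩
  have hz : 0 ≤ z ⬝ᵥ (A - algebraMap ℝ _ r) *ᵥ z := by
    simpa using hrA.dotProduct_mulVec_nonneg z
  simpa [sub_mulVec, Algebra.algebraMap_eq_smul_one, smul_mulVec] using hz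

lemma pi_withDensity_ofReal {ι : Type*} [Fintype ι] {α : ι → Type*} [∀ i, MeasurableSpace (α i)]
    {μ : ∀ i, Measure (α i)} [∀ i, SigmaFinite (μ i)] {f : ∀ i, α i → ℝ}
    (hf : ∀ i, Integrable (f i) (μ i)) (hf_nonneg : ∀ i x, 0 ≤ f i x) :
    Measure.pi (fun i => (μ i).withDensity fun x => ENNReal.ofReal (f i x)) =
      (Measure.pi μ).withDensity fun x => ENNReal.ofReal (∏ i, f i (x i)) := by
  refine Measure.pi_eq fun s hs => ?_
  have hfs (i : ι) : Integrable (f i) ((μ i).restrict (s i)) := (hf i).restrict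
  rw [withDensity_apply _ (.univ_pi hs), Measure.restrict_pi_pi,
    ← ofReal_integral_eq_lintegral_ofReal (.fintype_prod_dep hfs)
      (ae_of_all _ fun x => Finset.prod_nonneg fun i _ => hf_nonneg i (x i)),
    integral_fintype_prod_eq_prod,
    ENNReal.ofReal_prod_of_nonneg fun i _ => integral_nonneg (hf_nonneg i)]
  refine Finset.prod_congr rfl fun i _ => ?_
  rw [withDensity_apply _ (hs i),
    ofReal_integral_eq_lintegral_ofReal (hfs i) (ae_of_all _ (hf_nonneg i))]

lemma setLIntegral_preimage_exp_le_volume {s : Set ℝ} (hs : MeasurableSet s) :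
    ∫⁻ x in exp ⁻¹' s, ENNReal.ofReal (exp x) ≤ volume s := by
  calc ∫⁻ x in exp ⁻¹' s, ENNReal.ofReal (exp x)
      = volume (exp '' (exp ⁻¹' s)) := by
        rw [← setLIntegral_one, lintegral_image_eq_lintegral_abs_deriv_mul (measurable_exp hs)
          (fun x _ => (hasDerivAt_exp x).hasDerivWithinAt) exp_injective.injOn]
        simp only [abs_exp, mul_one]
    _ ≤ volume s := measure_mono (Set.image_preimage_subset _ _)

lemma gaussianPDFReal_le_mul_exp (μ : ℝ) {v : ℝ≥0} (hv : v ≠ 0) (x : ℝ) :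
    gaussianPDFReal μ v x ≤ (√(2 * π * v))⁻¹ * exp (v / 2 - μ) * exp x := by
  have : 0 < (v : ℝ) := by positivity
  rw [gaussianPDFReal, mul_assoc (√_)⁻¹, ← exp_add]
  gcongr
  rw [div_le_iff₀ (by positivity)]
  linarith [sq_nonneg (x - μ + v)]

lemma map_exp_gaussianReal_le_smul_volume (μ : ℝ) {v : ℝ≥0} (hv : v ≠ 0) :
    (gaussianReal μ v).map exp ≤
      ENNReal.ofReal ((√(2 * π * v))⁻¹ * exp (v / 2 - μ)) • volume := by
  set C : ℝ := (√(2 * π * v))⁻¹ * exp (v / 2 - μ)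
  refine Measure.le_iff.2 fun s hs => ?_
  calc (gaussianReal μ v).map exp s = ∫⁻ x in exp ⁻¹' s, gaussianPDF μ v x := by
        rw [Measure.map_apply measurable_exp hs, gaussianReal_apply μ hv]
    _ ≤ ∫⁻ x in exp ⁻¹' s, ENNReal.ofReal C * ENNReal.ofReal (exp x) := by
        refine lintegral_mono fun x => ?_
        rw [← ENNReal.ofReal_mul (by positivity)]
        exact ENNReal.ofReal_le_ofReal (gaussianPDFReal_le_mul_exp μ hv x)
    _ = ENNReal.ofReal C * ∫⁻ x in exp ⁻¹' s, ENNReal.ofReal (exp x) :=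
        lintegral_const_mul _ (by fun_prop)
    _ ≤ ENNReal.ofReal C * volume s := by
        gcongr
        exact setLIntegral_preimage_exp_le_volume hs

lemma lintegral_exp_gaussianReal (μ : ℝ) (v : ℝ≥0) :
    ∫⁻ x, ENNReal.ofReal (exp x) ∂gaussianReal μ v = ENNReal.ofReal (exp (μ + v / 2)) := by
  rw [← ofReal_integral_eq_lintegral_ofReal (by simpa using integrable_exp_mul_gaussianReal 1)
    (ae_of_all _ fun x => (exp_pos x).le)]
  simpa [mgf] using congrArg ENNReal.ofReal (congrFun (mgf_id_gaussianReal (μ := μ) (v := v)) 1)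

lemma prod_setOf_mem_Ioc_le_of_map_le_smul_volume {α β : Type*} [MeasurableSpace α]
    [MeasurableSpace β] {μ : Measure α} {ν : Measure β} [SFinite μ] [SFinite ν]
    {X : α → ℝ} {h : β → ℝ} (hX : Measurable X) (hh : Measurable h) {c : ℝ≥0∞}
    (hμ : μ.map X ≤ c • volume) (γ : ℝ) :
    μ.prod ν {p | X p.1 ∈ Set.Ioc (γ - h p.2) γ} ≤ c * ∫⁻ y, ENNReal.ofReal (h y) ∂ν := by
  have hmeas : MeasurableSet {p : α × β | X p.1 ∈ Set.Ioc (γ - h p.2) γ} := by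
    measurability
  have hsection (t : ℝ) : μ (X ⁻¹' Set.Ioc (γ - t) γ) ≤ c * ENNReal.ofReal t := by
    calc μ (X ⁻¹' Set.Ioc (γ - t) γ) = μ.map X (Set.Ioc (γ - t) γ) :=
          (Measure.map_apply hX measurableSet_Ioc).symm
      _ ≤ c * volume (Set.Ioc (γ - t) γ) := hμ _
      _ = c * ENNReal.ofReal t := by rw [Real.volume_Ioc, sub_sub_cancel]
  calc μ.prod ν {p | X p.1 ∈ Set.Ioc (γ - h p.2) γ}
      = ∫⁻ y, μ (X ⁻¹' Set.Ioc (γ - h y) γ) ∂ν := Measure.prod_apply_symm hmeas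
    _ ≤ ∫⁻ y, c * ENNReal.ofReal (h y) ∂ν := lintegral_mono fun y => hsection (h y)
    _ = c * ∫⁻ y, ENNReal.ofReal (h y) ∂ν := lintegral_const_mul _ (by fun_prop)

lemma lintegral_sum_exp_pi_gaussianReal {ι : Type*} [Fintype ι] (m : ι → ℝ) (v : ℝ≥0) :
    ∫⁻ y, ENNReal.ofReal (∑ i, exp (y i)) ∂Measure.pi (fun i => gaussianReal (m i) v) =
      ENNReal.ofReal (∑ i, exp (m i + v / 2)) := by
  simp only [ENNReal.ofReal_sum_of_nonneg fun _ _ => (exp_pos _).le]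
  rw [lintegral_finsetSum _ fun i _ => by fun_prop]
  refine Finset.sum_congr rfl fun i _ => ?_
  rw [← lintegral_exp_gaussianReal]
  exact (measurePreserving_eval (fun i => gaussianReal (m i) v) i).lintegral_comp
    measurable_exp.ennreal_ofReal

section ExpLayer

variable {n : ℕ}

/-- The event `{e^{y_k} ≤ γ} \ {∑ i, e^{y_i} ≤ γ}`, whose probability is `P₁ - P₂`. -/
def expLayer (k : Fin (n + 1)) (γ : ℝ) : Set (Fin (n + 1) → ℝ) :=
  {y | exp (y k) ≤ γ} \ {y | ∑ i, exp (y i) ≤ γ}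

lemma measurableSet_expLayer (k : Fin (n + 1)) (γ : ℝ) : MeasurableSet (expLayer k γ) :=
  (measurableSet_le (by fun_prop) (by fun_prop)).diff
    (measurableSet_le (by fun_prop) (by fun_prop))

lemma expLayer_eq_preimage_piFinSuccAbove (k : Fin (n + 1)) (γ : ℝ) :
    expLayer k γ = MeasurableEquiv.piFinSuccAbove (fun _ => ℝ) k ⁻¹'
      {p | exp p.1 ∈ Set.Ioc (γ - ∑ j, exp (p.2 j)) γ} := by
  ext y
  change exp (y k) ≤ γ ∧ ¬ ∑ i, exp (y i) ≤ γ ↔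
    γ - ∑ j, exp (y (k.succAbove j)) < exp (y k) ∧ exp (y k) ≤ γ
  rw [Fin.sum_univ_succAbove _ k, not_le, sub_lt_iff_lt_add, and_comm]

lemma pi_gaussianReal_expLayer_le (m : Fin (n + 1) → ℝ) {v : ℝ≥0} (hv : v ≠ 0)
    (k : Fin (n + 1)) (γ : ℝ) :
    (Measure.pi fun i => gaussianReal (m i) v).real (expLayer k γ) ≤
      (√(2 * π * v))⁻¹ * exp v * ∑ j, exp (m (k.succAbove j) - m k) := by
  refine ENNReal.toReal_le_of_le_ofReal (by positivity) ?_
  have hsplit := measurePreserving_piFinSuccAbove (fun i => gaussianReal (m i) v) k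
  rw [expLayer_eq_preimage_piFinSuccAbove, hsplit.measure_preimage_equiv]
  have hh : Measurable fun y : Fin n → ℝ => ∑ j, exp (y j) := by fun_prop
  refine (prod_setOf_mem_Ioc_le_of_map_le_smul_volume measurable_exp hh
    (map_exp_gaussianReal_le_smul_volume (m k) hv) γ).trans_eq ?_
  rw [lintegral_sum_exp_pi_gaussianReal, ← ENNReal.ofReal_mul (by positivity)]
  simp only [Finset.mul_sum, mul_assoc, ← exp_add]
  ring_nf

end ExpLayer

section MvnPdf

variable {n : ℕ} {S : Matrix (Fin n) (Fin n) ℝ}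

lemma mvnPdf_nonneg (m y : Fin n → ℝ) : 0 ≤ mvnPdf m S y := by
  unfold mvnPdf
  positivity

lemma continuous_mvnPdf (m : Fin n → ℝ) : Continuous (mvnPdf m S) := by
  unfold mvnPdf
  fun_prop

lemma exists_mvnPdf_le_mul_prod_gaussianPDFReal (hS : S.PosDef) :
    ∃ v : ℝ≥0, v ≠ 0 ∧ ∃ K : ℝ, 0 ≤ K ∧
      ∀ m y : Fin n → ℝ, mvnPdf m S y ≤ K * ∏ i, gaussianPDFReal (m i) v (y i) := by
  obtain ⟨r, hr, hrS⟩ := exists_pos_mul_dotProduct_self_le_of_posDef hS.inv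
  lift r to ℝ≥0 using hr.le
  have hr_ne : r ≠ 0 := (NNReal.coe_pos.1 hr).ne'
  have hexp (m y : Fin n → ℝ) : exp (-(1 / 2) * ((y - m) ⬝ᵥ S⁻¹ *ᵥ (y - m))) ≤
      ∏ i, exp (-(y i - m i) ^ 2 / (2 * (r⁻¹ : ℝ≥0))) := by
    rw [← exp_sum, exp_le_exp]
    calc -(1 / 2) * ((y - m) ⬝ᵥ S⁻¹ *ᵥ (y - m))
        ≤ -(1 / 2) * (r * ((y - m) ⬝ᵥ (y - m))) := by linarith [hrS (y - m)]
      _ = ∑ i, -(y i - m i) ^ 2 / (2 * (r⁻¹ : ℝ≥0)) := by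
        simp only [dotProduct, Pi.sub_apply, Finset.mul_sum, NNReal.coe_inv]
        exact Finset.sum_congr rfl fun i _ => by field_simp
  refine ⟨r⁻¹, inv_ne_zero hr_ne, √(2 * π * (r⁻¹ : ℝ≥0)) ^ n / √((2 * π) ^ n * S.det),
    by positivity, fun m y => ?_⟩
  have hsqrt : √(2 * π * (r⁻¹ : ℝ≥0)) ≠ 0 := by positivity
  calc mvnPdf m S y
      ≤ (∏ i, exp (-(y i - m i) ^ 2 / (2 * (r⁻¹ : ℝ≥0)))) / √((2 * π) ^ n * S.det) := by
        unfold mvnPdf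
        gcongr
        exact hexp m y
    _ = √(2 * π * (r⁻¹ : ℝ≥0)) ^ n / √((2 * π) ^ n * S.det) *
          ∏ i, gaussianPDFReal (m i) r⁻¹ (y i) := by
        simp only [gaussianPDFReal, Finset.prod_mul_distrib, Finset.prod_const,
          Finset.card_univ, Fintype.card_fin]
        rw [inv_pow, ← mul_div_right_comm, mul_inv_cancel_left₀ (pow_ne_zero n hsqrt)]

lemma integrable_mvnPdf (hS : S.PosDef) (m : Fin n → ℝ) : Integrable (mvnPdf m S) := by
  obtain ⟨v, -, K, -, hle⟩ := exists_mvnPdf_le_mul_prod_gaussianPDFReal hS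
  refine ((Integrable.fintype_prod fun i => integrable_gaussianPDFReal (m i) v).const_mul K).mono'
    (continuous_mvnPdf m).aestronglyMeasurable (ae_of_all _ fun y => ?_)
  rw [norm_of_nonneg (mvnPdf_nonneg m y)]
  exact hle m y

lemma exists_setIntegral_mvnPdf_le_mul_pi_gaussianReal (hS : S.PosDef) :
    ∃ v : ℝ≥0, v ≠ 0 ∧ ∃ K : ℝ, 0 ≤ K ∧ ∀ (m : Fin n → ℝ) (s : Set (Fin n → ℝ)),
      MeasurableSet s →
        ∫ y in s, mvnPdf m S y ≤ K * (Measure.pi fun i => gaussianReal (m i) v).real s := by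
  obtain ⟨v, hv, K, hK, hle⟩ := exists_mvnPdf_le_mul_prod_gaussianPDFReal hS
  refine ⟨v, hv, K, hK, fun m s hs => ?_⟩
  have hprod : Integrable fun y : Fin n → ℝ => ∏ i, gaussianPDFReal (m i) v (y i) :=
    .fintype_prod fun i => integrable_gaussianPDFReal (m i) v
  have hpi : (Measure.pi fun i => gaussianReal (m i) v) =
      volume.withDensity fun y => ENNReal.ofReal (∏ i, gaussianPDFReal (m i) v (y i)) := by
    simp only [gaussianReal_of_var_ne_zero _ hv, gaussianPDF_def]
    exact pi_withDensity_ofReal (fun i => integrable_gaussianPDFReal (m i) v)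
      fun i => gaussianPDFReal_nonneg (m i) v
  calc ∫ y in s, mvnPdf m S y
      ≤ ∫ y in s, K * ∏ i, gaussianPDFReal (m i) v (y i) :=
        setIntegral_mono (integrable_mvnPdf hS m).integrableOn
          (hprod.const_mul K).integrableOn (hle m)
    _ = K * ∫ y in s, ∏ i, gaussianPDFReal (m i) v (y i) := integral_const_mul _ _
    _ = K * (Measure.pi fun i => gaussianReal (m i) v).real s := by
        rw [integral_eq_lintegral_of_nonneg_ae
          (ae_of_all _ fun y => Finset.prod_nonneg fun i _ => gaussianPDFReal_nonneg _ _ _)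
          hprod.aestronglyMeasurable.restrict, measureReal_def, hpi, withDensity_apply _ hs]

end MvnPdf

section ShiftedMean

variable {n : ℕ} {S : Matrix (Fin n) (Fin n) ℝ}

/-- The mean `μ + Λ*` of the importance sampling density `g`, with dominant index `k`. It is the
conditional mean of `𝒩(μ, Σ)` given that coordinate `k` equals `log γ`. -/
noncomputable def shiftedMean (m : Fin n → ℝ) (S : Matrix (Fin n) (Fin n) ℝ) (k : Fin n) (γ : ℝ) :
    Fin n → ℝ :=
  m + fun i => if i = k then log γ - m k else S i k / S k k * (log γ - m k)

lemma exp_shiftedMean_sub {m : Fin n → ℝ} {i k : Fin n} (hik : i ≠ k) {γ : ℝ} (hγ : 0 < γ) :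
    exp (shiftedMean m S k γ i - shiftedMean m S k γ k) =
      exp (m i - S i k / S k k * m k) * γ ^ (S i k / S k k - 1) := by
  rw [rpow_def_of_pos hγ, ← exp_add]
  simp only [shiftedMean, Pi.add_apply, if_neg hik, if_true]
  ring_nf

end ShiftedMean

section TailDifference

variable {n : ℕ} {S : Matrix (Fin (n + 1)) (Fin (n + 1)) ℝ}

lemma exists_setIntegral_mvnPdf_sub_le (hS : S.PosDef) :
    ∃ C : ℝ, 0 ≤ C ∧ ∀ (m : Fin (n + 1) → ℝ) (k : Fin (n + 1)) (γ : ℝ),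
      (∫ y in {y | exp (y k) ≤ γ}, mvnPdf m S y) - ∫ y in {y | ∑ i, exp (y i) ≤ γ}, mvnPdf m S y ≤
        C * ∑ j, exp (m (k.succAbove j) - m k) := by
  obtain ⟨v, hv, K, hK, hle⟩ := exists_setIntegral_mvnPdf_le_mul_pi_gaussianReal hS
  refine ⟨K * ((√(2 * π * v))⁻¹ * exp v), by positivity, fun m k γ => ?_⟩
  have hsub : {y : Fin (n + 1) → ℝ | ∑ i, exp (y i) ≤ γ} ⊆ {y | exp (y k) ≤ γ} := fun y hy =>
    (Finset.single_le_sum (f := fun i => exp (y i)) (fun i _ => (exp_pos _).le)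
      (Finset.mem_univ k)).trans hy
  rw [← setIntegral_sdiff (measurableSet_le (by fun_prop) (by fun_prop))
    (integrable_mvnPdf hS m).integrableOn hsub, mul_assoc]
  exact (hle m _ (measurableSet_expLayer k γ)).trans
    (mul_le_mul_of_nonneg_left (pi_gaussianReal_expLayer_le m hv k γ) hK)

theorem stmt13_general (hS : S.PosDef) (m : Fin (n + 1) → ℝ) (k : Fin (n + 1))
    (a c : Fin (n + 1) → ℝ) (ha : ∀ i, a i = S i k / S k k - 1)
    (hc : ∀ i, c i = exp (m i - S i k / S k k * m k)) (i₀ : Fin (n + 1)) :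
    ∃ C : ℝ, ∀ γ > 0, (∀ i ≠ k, c i * γ ^ a i ≤ c i₀ * γ ^ a i₀) →
      (∫ y in {y | exp (y k) ≤ γ}, mvnPdf (shiftedMean m S k γ) S y) -
        ∫ y in {y | ∑ i, exp (y i) ≤ γ}, mvnPdf (shiftedMean m S k γ) S y ≤ C * γ ^ a i₀ := by
  obtain ⟨C, hC, hle⟩ := exists_setIntegral_mvnPdf_sub_le hS
  refine ⟨C * (n * c i₀), fun γ hγ hmax => (hle _ k γ).trans ?_⟩
  rw [mul_assoc]
  refine mul_le_mul_of_nonneg_left ?_ hC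
  calc ∑ j, exp (shiftedMean m S k γ (k.succAbove j) - shiftedMean m S k γ k)
      = ∑ j, c (k.succAbove j) * γ ^ a (k.succAbove j) := by
        simp only [exp_shiftedMean_sub (Fin.succAbove_ne k _) hγ, ha, hc]
    _ ≤ ∑ _j : Fin n, c i₀ * γ ^ a i₀ :=
        Finset.sum_le_sum fun j _ => hmax _ (Fin.succAbove_ne k j)
    _ = n * c i₀ * γ ^ a i₀ := by simp [mul_assoc]

end TailDifference

theorem stmt13 {n : ℕ} (m : Fin (n + 1) → ℝ) (S : Matrix (Fin (n + 1)) (Fin (n + 1)) ℝ)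
    (hS : S.PosDef)
    (hA : ∀ j : Fin (n + 1), j ≠ 0 →
      Real.sqrt (S 0 0) < S 0 j / Real.sqrt (S 0 0 * S j j) * Real.sqrt (S j j))
    (a c : Fin (n + 1) → ℝ)
    (ha : ∀ i, a i = S i 0 / S 0 0 - 1)
    (hc : ∀ i, c i = Real.exp (m i - S i 0 / S 0 0 * m 0))
    (i₀ : Fin (n + 1)) (hi₀ : i₀ ≠ 0)
    (hmax : ∀ᶠ γ in nhdsWithin (0 : ℝ) (Set.Ioi 0),
      ∀ i : Fin (n + 1), i ≠ 0 → c i * γ ^ (a i) ≤ c i₀ * γ ^ (a i₀)) :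
    let Λ : ℝ → Fin (n + 1) → ℝ := fun γ k =>
      if k = 0 then Real.log γ - m 0 else S k 0 / S 0 0 * (Real.log γ - m 0)
    let g : ℝ → (Fin (n + 1) → ℝ) → ℝ := fun γ y => mvnPdf (m + Λ γ) S y
    let P1 : ℝ → ℝ := fun γ => ∫ y in {y : Fin (n + 1) → ℝ | Real.exp (y 0) ≤ γ}, g γ y
    let P2 : ℝ → ℝ := fun γ =>
      ∫ y in {y : Fin (n + 1) → ℝ | ∑ i, Real.exp (y i) ≤ γ}, g γ y
    ∃ C₂ : ℝ, ∀ᶠ γ in nhdsWithin (0 : ℝ) (Set.Ioi 0),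
      P1 γ - P2 γ ≤ C₂ * γ ^ (a i₀) := by
  exact (stmt13_general hS m 0 a c ha hc i₀).imp fun _ hC =>
    (hmax.and self_mem_nhdsWithin).mono fun γ hγ => hC γ hγ.2 hγ.1
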